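/- Embedding of synchronous TeamLTL into ∀TeamCTL(⊆): define the translation (·)° from TeamLTL into ∀TeamCTL(⊆) recursively by p° = p, (¬p)° = ¬p, (φ∧ψ)° = φ°∧ψ°, (φ∨ψ)° = φ°∨ψ°, (Xφ)° = X_∀((o ⊆ ¬o) ∨ φ°), (φUψ)° = φ° U_∀ (ψ° ∨ (o ⊆ ¬o)), (φWψ)° = φ° W_∀ (ψ° ∨ (o ⊆ ¬o)). Let ψ''_synch := (o ∧ X_∀(¬o ∨ (o ⊆ ¬o))) ∨ (¬o ∧ X_∀(o ∨ (o ⊆ ¬o))). Then for every TeamLTL formula φ over AP and every nonempty team T over AP: T ⊨ₛ φ if and only if T_o ⊨∀ (φ° ∧ o ∧ (ψ''_synch W_∀ ⊥)). -/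

import Mathlib

namespace TTS




abbrev Trace (AP : Type) := ℕ → Set AP

def IsStutTef {ι : Type} (τ : ℕ → ι → ℕ) : Prop :=
  ∀ n i, τ n i ≤ τ (n + 1) i

def IsTef {ι : Type} (τ : ℕ → ι → ℕ) : Prop :=
  IsStutTef τ ∧ (∀ n, τ n ≠ τ (n + 1)) ∧ (∀ n i, τ (n + 1) i ≤ τ n i + 1)

def Initial {ι : Type} (τ : ℕ → ι → ℕ) : Prop := ∀ i, τ 0 i = 0

def shift {ι : Type} (τ : ℕ → ι → ℕ) (k : ℕ) : ℕ → ι → ℕ := fun n => τ (n + k)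

inductive Formula (AP : Type) : Type
  | atom : AP → Formula AP
  | natom : AP → Formula AP
  | and : Formula AP → Formula AP → Formula AP
  | or : Formula AP → Formula AP → Formula AP
  | X : Formula AP → Formula AP
  | U : Formula AP → Formula AP → Formula AP
  | W : Formula AP → Formula AP → Formula AP

def sat {AP : Type} : {ι : Type} → (ι → Trace AP) → (ℕ → ι → ℕ) → Formula AP → Prop
  | _, T, τ, .atom p => ∀ i, p ∈ T i (τ 0 i)
  | _, T, τ, .natom p => ∀ i, p ∉ T i (τ 0 i)
  | _, T, τ, .and φ ψ => sat T τ φ ∧ sat T τ ψ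
  | ι, T, τ, .or φ ψ =>
      ∃ P : ι → Prop,
        sat (fun i : {i // P i} => T i.1) (fun n i => τ n i.1) φ ∧
        sat (fun i : {i // ¬ P i} => T i.1) (fun n i => τ n i.1) ψ
  | _, T, τ, .X φ => sat T (shift τ 1) φ
  | _, T, τ, .U φ ψ =>
      ∃ k, sat T (shift τ k) ψ ∧ ∀ m, m < k → sat T (shift τ m) φ
  | _, T, τ, .W φ ψ =>
      ∀ k, sat T (shift τ k) φ ∨ ∃ m, m ≤ k ∧ sat T (shift τ m) ψ

def satE {AP ι : Type} (T : ι → Trace AP) (φ : Formula AP) : Prop :=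
  ∃ τ : ℕ → ι → ℕ, IsTef τ ∧ Initial τ ∧ sat T τ φ

def satA {AP ι : Type} (T : ι → Trace AP) (φ : Formula AP) : Prop :=
  ∀ τ : ℕ → ι → ℕ, IsTef τ → Initial τ → sat T τ φ

def satS {AP ι : Type} (T : ι → Trace AP) (φ : Formula AP) : Prop :=
  sat T (fun n _ => n) φ

def tshift {AP : Type} (t : Trace AP) (k : ℕ) : Trace AP := fun n => t (n + k)

def ltlSat {AP : Type} : Trace AP → Formula AP → Prop
  | t, .atom p => p ∈ t 0
  | t, .natom p => p ∉ t 0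
  | t, .and φ ψ => ltlSat t φ ∧ ltlSat t ψ
  | t, .or φ ψ => ltlSat t φ ∨ ltlSat t ψ
  | t, .X φ => ltlSat (tshift t 1) φ
  | t, .U φ ψ => ∃ k, ltlSat (tshift t k) ψ ∧ ∀ m, m < k → ltlSat (tshift t m) φ
  | t, .W φ ψ => ∀ k, ltlSat (tshift t k) φ ∨ ∃ m, m ≤ k ∧ ltlSat (tshift t m) ψ

/-- TeamCTL formulas with tef quantifiers and the inclusion atom p ⊆ ¬p
on an atomic proposition p. -/
inductive QFormula (AP : Type) : Type
  | atom : AP → QFormula AP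
  | natom : AP → QFormula AP
  | subNeg : AP → QFormula AP
  | and : QFormula AP → QFormula AP → QFormula AP
  | or : QFormula AP → QFormula AP → QFormula AP
  | X : QFormula AP → QFormula AP
  | U : QFormula AP → QFormula AP → QFormula AP
  | W : QFormula AP → QFormula AP → QFormula AP
  | Ex : QFormula AP → QFormula AP
  | All : QFormula AP → QFormula AP

def qsat {AP : Type} : {ι : Type} → (ι → Trace AP) → (ℕ → ι → ℕ) → QFormula AP → Prop
  | _, T, τ, .atom p => ∀ i, p ∈ T i (τ 0 i)
  | _, T, τ, .natom p => ∀ i, p ∉ T i (τ 0 i)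
  | _, T, τ, .subNeg p => ∀ i, ∃ j, (p ∈ T i (τ 0 i) ↔ p ∉ T j (τ 0 j))
  | _, T, τ, .and φ ψ => qsat T τ φ ∧ qsat T τ ψ
  | ι, T, τ, .or φ ψ =>
      ∃ P : ι → Prop,
        qsat (fun i : {i // P i} => T i.1) (fun n i => τ n i.1) φ ∧
        qsat (fun i : {i // ¬ P i} => T i.1) (fun n i => τ n i.1) ψ
  | _, T, τ, .X φ => qsat T (shift τ 1) φ
  | _, T, τ, .U φ ψ =>
      ∃ k, qsat T (shift τ k) ψ ∧ ∀ m, m < k → qsat T (shift τ m) φ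
  | _, T, τ, .W φ ψ =>
      ∀ k, qsat T (shift τ k) φ ∨ ∃ m, m ≤ k ∧ qsat T (shift τ m) ψ
  | _, T, τ, .Ex φ =>
      ∃ τ', IsTef τ' ∧ (∀ i, τ' 0 i = τ 0 i) ∧ qsat T τ' φ
  | _, T, τ, .All φ =>
      ∀ τ', IsTef τ' → (∀ i, τ' 0 i = τ 0 i) → qsat T τ' φ

def qsatA {AP ι : Type} (T : ι → Trace AP) (φ : QFormula AP) : Prop :=
  ∀ τ : ℕ → ι → ℕ, IsTef τ → Initial τ → qsat T τ φ

/-- The team T_o over AP ∪ {o}: the fresh proposition o (here: none) is added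
at exactly the even positions of every trace. -/
def addO {AP ι : Type} (T : ι → Trace AP) : ι → Trace (Option AP) :=
  fun i n => {x | (∃ p, x = some p ∧ p ∈ T i n) ∨ (x = none ∧ Even n)}

/-- The translation (·)° from TeamLTL over AP into ∀TeamCTL(⊆) over AP ∪ {o}:
(Xφ)° = X_∀((o ⊆ ¬o) ∨ φ°), (φUψ)° = φ° U_∀ (ψ° ∨ (o ⊆ ¬o)),
(φWψ)° = φ° W_∀ (ψ° ∨ (o ⊆ ¬o)). -/
def circ {AP : Type} : Formula AP → QFormula (Option AP)
  | .atom p => .atom (some p)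
  | .natom p => .natom (some p)
  | .and φ ψ => .and (circ φ) (circ ψ)
  | .or φ ψ => .or (circ φ) (circ ψ)
  | .X φ => .All (.X (.or (.subNeg none) (circ φ)))
  | .U φ ψ => .All (.U (circ φ) (.or (circ ψ) (.subNeg none)))
  | .W φ ψ => .All (.W (circ φ) (.or (circ ψ) (.subNeg none)))

/-- ψ''_synch := (o ∧ X_∀(¬o ∨ (o ⊆ ¬o))) ∨ (¬o ∧ X_∀(o ∨ (o ⊆ ¬o))). -/
def psiSynch'' (AP : Type) : QFormula (Option AP) :=
  .or (.and (.atom none) (.All (.X (.or (.natom none) (.subNeg none)))))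
      (.and (.natom none) (.All (.X (.or (.atom none) (.subNeg none)))))


theorem none_mem_addO {AP ι : Type} (T : ι → Trace AP) (i : ι) (n : ℕ) :
    none ∈ addO T i n ↔ Even n := by
  simp [addO]

theorem some_mem_addO {AP ι : Type} (T : ι → Trace AP) (i : ι) (n : ℕ) (p : AP) :
    some p ∈ addO T i n ↔ p ∈ T i n := by
  simp [addO]

theorem sat_reindex {AP : Type} (φ : Formula AP) :
    ∀ {κ ι : Type} (f : κ → ι) (T : ι → Trace AP) (τ : ℕ → ι → ℕ),
      sat T τ φ → sat (fun i => T (f i)) (fun n i => τ n (f i)) φ := by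
  induction φ with
  | atom p => intro κ ι f T τ h i; exact h (f i)
  | natom p => intro κ ι f T τ h i; exact h (f i)
  | and φ ψ h1 h2 => intro κ ι f T τ h; exact ⟨h1 f T τ h.1, h2 f T τ h.2⟩
  | or φ ψ h1 h2 =>
    intro κ ι f T τ h
    obtain ⟨P, ha, hb⟩ := h
    refine ⟨fun i => P (f i), ?_, ?_⟩
    · exact h1 (fun i : {i // P (f i)} => (⟨f i.1, i.2⟩ : {i // P i})) _ _ ha
    · exact h2 (fun i : {i // ¬ P (f i)} => (⟨f i.1, i.2⟩ : {i // ¬ P i})) _ _ hb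
  | X φ h1 => intro κ ι f T τ h; exact h1 f T _ h
  | U φ ψ h1 h2 =>
    intro κ ι f T τ h
    obtain ⟨k, ha, hb⟩ := h
    exact ⟨k, h2 f T _ ha, fun m hm => h1 f T _ (hb m hm)⟩
  | W φ ψ h1 h2 =>
    intro κ ι f T τ h k
    rcases h k with ha | ⟨m, hm, hb⟩
    · exact Or.inl (h1 f T _ ha)
    · exact Or.inr ⟨m, hm, h2 f T _ hb⟩

theorem sat_empty {AP : Type} (φ : Formula AP) :
    ∀ {ι : Type} (_ : IsEmpty ι) (T : ι → Trace AP) (τ : ℕ → ι → ℕ), sat T τ φ := by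
  induction φ with
  | atom p => intro ι he T τ i; exact he.elim i
  | natom p => intro ι he T τ i; exact he.elim i
  | and φ ψ h1 h2 => intro ι he T τ; exact ⟨h1 he T τ, h2 he T τ⟩
  | or φ ψ h1 h2 =>
    intro ι he T τ
    exact ⟨fun _ => True, h1 ⟨fun i => he.elim i.1⟩ _ _, h2 ⟨fun i => he.elim i.1⟩ _ _⟩
  | X φ h1 => intro ι he T τ; exact h1 he T _
  | U φ ψ h1 h2 =>
    intro ι he T τ
    exact ⟨0, h2 he T _, fun m hm => absurd hm (Nat.not_lt_zero m)⟩
  | W φ ψ h1 h2 => intro ι he T τ k; exact Or.inl (h1 he T _)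

theorem sync_tef {ι : Type} (hne : Nonempty ι) (n : ℕ) :
    IsTef (fun m (_ : ι) => m + n) := by
  obtain ⟨i⟩ := hne
  refine ⟨fun m j => ?_, fun m h => ?_, fun m j => ?_⟩
  · simp only; omega
  · have := congrFun h i
    simp only at this; omega
  · simp only; omega

theorem desync {ι : Type} {τ : ℕ → ι → ℕ} (hτ : IsTef τ) {m n : ℕ}
    (h : ∀ i, τ m i = n) (h' : ¬ ∀ i, τ (m + 1) i = n + 1) (i : ι) :
    ∃ j, (Even (τ (m + 1) i) ↔ ¬ Even (τ (m + 1) j)) := by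
  obtain ⟨hs, hst, hw⟩ := hτ
  have hb : ∀ i, τ (m + 1) i = n ∨ τ (m + 1) i = n + 1 := by
    intro i
    have := hs m i
    have := hw m i
    have := h i
    omega
  push Not at h'
  obtain ⟨a, ha⟩ := h'
  have ha' : τ (m + 1) a = n := (hb a).resolve_right ha
  obtain ⟨b, hbb⟩ : ∃ b, τ (m + 1) b = n + 1 := by
    by_contra hc
    push Not at hc
    apply hst m
    funext i
    rw [h i, (hb i).resolve_right (hc i)]
  rcases hb i with hi | hi
  · exact ⟨b, by rw [hi, hbb, Nat.even_add_one, not_not]⟩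
  · exact ⟨a, by rw [hi, ha', Nat.even_add_one]⟩

/-- First loss of synchronicity: either synchronous up to k, or an inclusion witness. -/
theorem first_desync {ι : Type} {τ : ℕ → ι → ℕ} (hτ : IsTef τ) {n : ℕ}
    (h : ∀ i, τ 0 i = n) (k : ℕ) :
    (∀ m ≤ k, ∀ i, τ m i = m + n) ∨
    ∃ j ≤ k, (∀ m < j, ∀ i, τ m i = m + n) ∧
      ∀ i, ∃ i', (Even (τ j i) ↔ ¬ Even (τ j i')) := by
  induction k with
  | zero =>
    left; intro m hm i
    obtain rfl : m = 0 := by omega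
    rw [h i]; omega
  | succ k ih =>
    rcases ih with ih | ⟨j, hj, h1, h2⟩
    · by_cases hc : ∀ i, τ (k + 1) i = (k + n) + 1
      · left; intro m hm i
        rcases Nat.lt_or_ge k m with hk | hk
        · obtain rfl : m = k + 1 := by omega
          rw [hc i]; omega
        · exact ih m hk i
      · right
        exact ⟨k + 1, le_rfl, fun m hm => ih m (by omega),
          desync hτ (ih k le_rfl) hc⟩
    · exact Or.inr ⟨j, by omega, h1, h2⟩

def Main {AP : Type} (φ : Formula AP) : Prop :=
  ∀ {ι : Type} (T : ι → Trace AP) (τ : ℕ → ι → ℕ) (n : ℕ), (∀ i, τ 0 i = n) →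
    (sat T (fun m _ => m + n) φ ↔ qsat (addO T) τ (circ φ))

theorem subNeg_iff {AP ι : Type} (T : ι → Trace AP) (τ : ℕ → ι → ℕ) :
    qsat (addO T) τ (.subNeg none) ↔
      ∀ i, ∃ j, (Even (τ 0 i) ↔ ¬ Even (τ 0 j)) := by
  simp only [qsat, none_mem_addO]

theorem or_left_intro {AP : Type} {φ : Formula AP} (hφ : Main φ) {ι : Type}
    (T : ι → Trace AP) (τ : ℕ → ι → ℕ) (n : ℕ) (h0 : ∀ i, τ 0 i = n)
    (h : sat T (fun m _ => m + n) φ) :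
    qsat (addO T) τ (.or (circ φ) (.subNeg none)) := by
  refine ⟨fun _ => True, ?_, fun i => absurd trivial i.2⟩
  exact (hφ (fun i : {i : ι // True} => T i.1) _ n (fun i => h0 i.1)).1
    (sat_reindex φ (fun i : {i : ι // True} => i.1) _ _ h)

theorem or_left_elim {AP : Type} {φ : Formula AP} (hφ : Main φ) {ι : Type}
    (T : ι → Trace AP) (τ : ℕ → ι → ℕ) (n : ℕ) (h0 : ∀ i, τ 0 i = n)
    (h : qsat (addO T) τ (.or (circ φ) (.subNeg none))) :
    sat T (fun m _ => m + n) φ := by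
  obtain ⟨P, ha, hb⟩ := h
  have hb' := (subNeg_iff (fun i : {i // ¬ P i} => T i.1) (fun n i => τ n i.1)).1 hb
  have hP : ∀ i, P i := by
    intro i
    by_contra hi
    obtain ⟨j, hj⟩ := hb' ⟨i, hi⟩
    simp only [h0] at hj
    tauto
  have := (hφ (fun i : {i // P i} => T i.1) _ n (fun i => h0 i.1)).2 ha
  exact sat_reindex φ (fun i : ι => (⟨i, hP i⟩ : {i // P i})) _ _ this

theorem or_comm' {AP ι : Type} (T : ι → Trace AP) (τ : ℕ → ι → ℕ) (φ : Formula AP)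
    (hφ : Main φ) (n : ℕ) (h0 : ∀ i, τ 0 i = n) :
    qsat (addO T) τ (.or (.subNeg none) (circ φ)) ↔ sat T (fun m _ => m + n) φ := by
  constructor
  · rintro ⟨P, hb, ha⟩
    have hb' := (subNeg_iff (fun i : {i // P i} => T i.1) (fun n i => τ n i.1)).1 hb
    have hP : ∀ i, ¬ P i := by
      intro i hi
      obtain ⟨j, hj⟩ := hb' ⟨i, hi⟩
      simp only [h0] at hj
      tauto
    have := (hφ (fun i : {i // ¬ P i} => T i.1) _ n (fun i => h0 i.1)).2 ha
    exact sat_reindex φ (fun i : ι => (⟨i, hP i⟩ : {i // ¬ P i})) _ _ this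
  · intro h
    refine ⟨fun _ => False, fun i => i.2.elim, ?_⟩
    exact (hφ (fun i : {i : ι // ¬ False} => T i.1) _ n (fun i => h0 i.1)).1
      (sat_reindex φ (fun i : {i : ι // ¬ False} => i.1) _ _ h)

theorem qsat_empty {AP : Type} (φ : Formula AP) :
    ∀ {ι : Type} (_ : IsEmpty ι) (T : ι → Trace (Option AP)) (τ : ℕ → ι → ℕ),
      qsat T τ (circ φ) := by
  induction φ with
  | atom p => intro ι he T τ i; exact he.elim i
  | natom p => intro ι he T τ i; exact he.elim i
  | and φ ψ h1 h2 => intro ι he T τ; exact ⟨h1 he T τ, h2 he T τ⟩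
  | or φ ψ h1 h2 =>
    intro ι he T τ
    exact ⟨fun _ => True, h1 ⟨fun i => he.elim i.1⟩ _ _, h2 ⟨fun i => he.elim i.1⟩ _ _⟩
  | X φ h1 =>
    intro ι he T τ τ' h'
    exact absurd (funext fun i => he.elim i) (h'.2.1 0)
  | U φ ψ h1 h2 =>
    intro ι he T τ τ' h'
    exact absurd (funext fun i => he.elim i) (h'.2.1 0)
  | W φ ψ h1 h2 =>
    intro ι he T τ τ' h'
    exact absurd (funext fun i => he.elim i) (h'.2.1 0)

theorem sat_shift {AP ι : Type} (T : ι → Trace AP) (φ : Formula AP) (k n : ℕ) :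
    sat T (shift (fun m _ => m + n) k) φ ↔ sat T (fun m _ => m + (k + n)) φ := by
  have : shift (fun m (_ : ι) => m + n) k = fun m _ => m + (k + n) := by
    funext m i; simp only [shift]; omega
  rw [this]

theorem sub_right {AP ι : Type} (T : ι → Trace AP) (τ : ℕ → ι → ℕ)
    (φ : QFormula (Option AP))
    (hφ : qsat (fun i : {i : ι // False} => addO T i.1) (fun n i => τ n i.1) φ)
    (h : ∀ i, ∃ j, (Even (τ 0 i) ↔ ¬ Even (τ 0 j))) :
    qsat (addO T) τ (.or φ (.subNeg none)) := by
  refine ⟨fun _ => False, hφ, ?_⟩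
  refine (subNeg_iff (fun i : {i : ι // ¬ False} => T i.1) (fun n i => τ n i.1)).2 ?_
  intro i
  obtain ⟨j, hj⟩ := h i.1
  exact ⟨⟨j, not_false⟩, hj⟩

theorem main_all {AP : Type} (φ : Formula AP) : Main φ := by
  induction φ with
  | atom p =>
    intro ι T τ n h0
    simp only [sat, circ, qsat, some_mem_addO, h0, Nat.zero_add]
  | natom p =>
    intro ι T τ n h0
    simp only [sat, circ, qsat, some_mem_addO, h0, Nat.zero_add]
  | and φ ψ h1 h2 =>
    intro ι T τ n h0
    exact and_congr (h1 T τ n h0) (h2 T τ n h0)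
  | or φ ψ h1 h2 =>
    intro ι T τ n h0
    refine exists_congr fun P => and_congr ?_ ?_
    · exact h1 (fun i : {i // P i} => T i.1) _ n (fun i => h0 i.1)
    · exact h2 (fun i : {i // ¬ P i} => T i.1) _ n (fun i => h0 i.1)
  | X φ h1 =>
    intro ι T τ n h0
    rcases isEmpty_or_nonempty ι with he | hne
    · exact iff_of_true (sat_empty _ he _ _) (qsat_empty _ he _ _)
    constructor
    · intro h τ' ht h0'
      have h := (sat_shift T φ 1 n).1 h
      by_cases hc : ∀ i, τ' 1 i = n + 1
      · exact (or_comm' T (shift τ' 1) φ h1 (1 + n)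
          (fun i => (hc i).trans (Nat.add_comm _ _))).2 h
      · have hd := desync (m := 0) ht (fun i => (h0' i).trans (h0 i)) hc
        refine ⟨fun _ => True, ?_, ?_⟩
        · refine (subNeg_iff (fun i : {i : ι // True} => T i.1) _).2 ?_
          intro i
          obtain ⟨j, hj⟩ := hd i.1
          exact ⟨⟨j, trivial⟩, hj⟩
        · exact qsat_empty _ ⟨fun i => i.2 trivial⟩ _ _
    · intro h
      have h := h (fun m _ => m + n) (sync_tef hne n) (fun i => by simp [h0])
      exact (sat_shift T φ 1 n).2 ((or_comm' T (shift (fun m _ => m + n) 1) φ h1 (1 + n)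
          (fun i => by simp [shift])).1 h)
  | U φ ψ h1 h2 =>
    intro ι T τ n h0
    rcases isEmpty_or_nonempty ι with he | hne
    · exact iff_of_true (sat_empty _ he _ _) (qsat_empty _ he _ _)
    constructor
    · rintro ⟨k, ha, hb⟩ τ' ht h0'
      rcases first_desync ht (fun i => (h0' i).trans (h0 i)) k with hs | ⟨j, hj, hs, hd⟩
      · refine ⟨k, or_left_intro h2 T _ (k + n) (fun i => ?_) ((sat_shift T ψ k n).1 ha),
          fun m hm => ?_⟩
        · simp only [shift, Nat.zero_add]; exact hs k le_rfl i
        · refine (h1 T _ (m + n) (fun i => ?_)).1 ((sat_shift T φ m n).1 (hb m hm))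
          simp only [shift, Nat.zero_add]; exact hs m hm.le i
      · refine ⟨j, sub_right T _ _ (qsat_empty _ ⟨fun i => i.2⟩ _ _) ?_, fun m hm => ?_⟩
        · simpa only [shift, Nat.zero_add] using hd
        · refine (h1 T _ (m + n) (fun i => ?_)).1
            ((sat_shift T φ m n).1 (hb m (by omega)))
          simp only [shift, Nat.zero_add]; exact hs m hm i
    · intro h
      obtain ⟨k, ha, hb⟩ := h (fun m _ => m + n) (sync_tef hne n) (fun i => by simp [h0])
      refine ⟨k, (sat_shift T ψ k n).2 ?_, fun m hm => (sat_shift T φ m n).2 ?_⟩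
      · exact or_left_elim h2 T _ (k + n) (fun i => by simp [shift]) ha
      · exact (h1 T _ (m + n) (fun i => by simp [shift])).2 (hb m hm)
  | W φ ψ h1 h2 =>
    intro ι T τ n h0
    rcases isEmpty_or_nonempty ι with he | hne
    · exact iff_of_true (sat_empty _ he _ _) (qsat_empty _ he _ _)
    constructor
    · intro h τ' ht h0' k
      rcases first_desync ht (fun i => (h0' i).trans (h0 i)) k with hs | ⟨j, hj, hs, hd⟩
      · rcases h k with ha | ⟨m, hm, hb⟩
        · left
          refine (h1 T _ (k + n) (fun i => ?_)).1 ((sat_shift T φ k n).1 ha)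
          simp only [shift, Nat.zero_add]; exact hs k le_rfl i
        · right
          refine ⟨m, hm, or_left_intro h2 T _ (m + n) (fun i => ?_)
            ((sat_shift T ψ m n).1 hb)⟩
          simp only [shift, Nat.zero_add]; exact hs m hm i
      · right
        refine ⟨j, hj, sub_right T _ _ (qsat_empty _ ⟨fun i => i.2⟩ _ _) ?_⟩
        simpa only [shift, Nat.zero_add] using hd
    · intro h k
      rcases h (fun m _ => m + n) (sync_tef hne n) (fun i => by simp [h0]) k with
        ha | ⟨m, hm, hb⟩
      · left
        exact (sat_shift T φ k n).2 ((h1 T _ (k + n) (fun i => by simp [shift])).2 ha)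
      · right
        exact ⟨m, hm, (sat_shift T ψ m n).2
          (or_left_elim h2 T _ (m + n) (fun i => by simp [shift]) hb)⟩

/-- After one step from a parity-homogeneous configuration, either someone kept the parity
and the inclusion atom holds, or everybody changed parity. -/
theorem step_parity {ι : Type} {τ : ℕ → ι → ℕ} (hτ : IsTef τ) {E : Prop}
    (h : ∀ i, Even (τ 0 i) ↔ E) :
    (∀ i, Even (τ 1 i) ↔ ¬ E) ∨ ∀ i, ∃ j, (Even (τ 1 i) ↔ ¬ Even (τ 1 j)) := by
  obtain ⟨hs, hst, hw⟩ := hτ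
  have hb : ∀ i, τ 1 i = τ 0 i ∨ τ 1 i = τ 0 i + 1 := by
    intro i
    have := hs 0 i
    have := hw 0 i
    simp only [Nat.zero_add] at *
    omega
  obtain ⟨b, hbb⟩ : ∃ b, τ 1 b = τ 0 b + 1 := by
    by_contra hc
    push Not at hc
    apply hst 0
    funext i
    exact ((hb i).resolve_right (hc i)).symm
  have hB : Even (τ 1 b) ↔ ¬ E := by rw [hbb, Nat.even_add_one, h]
  by_cases hc : ∀ i, Even (τ 1 i) ↔ ¬ E
  · exact Or.inl hc
  · right
    push Not at hc
    obtain ⟨a, ha⟩ := hc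
    intro i
    by_cases hi : Even (τ 1 i) ↔ E
    · exact ⟨b, by tauto⟩
    · exact ⟨a, by tauto⟩

theorem psi_valid {AP ι : Type} (T : ι → Trace AP) (τ : ℕ → ι → ℕ) :
    qsat (addO T) τ (psiSynch'' AP) := by
  refine ⟨fun i => Even (τ 0 i), ⟨?_, ?_⟩, ⟨?_, ?_⟩⟩
  · intro i; exact (none_mem_addO T i.1 _).2 i.2
  · intro τ' ht h0
    rcases step_parity (E := True) ht (fun i => by rw [h0 i]; simpa using i.2) with h | h
    · refine ⟨fun _ => True, ?_, fun i => absurd trivial i.2⟩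
      intro i hi
      exact (h i.1).1 ((none_mem_addO T i.1.1 _).1 hi) trivial
    · exact sub_right (fun i : {i // Even (τ 0 i)} => T i.1) _ _ (fun i => i.2.elim) h
  · intro i hi; exact i.2 ((none_mem_addO T i.1 _).1 hi)
  · intro τ' ht h0
    rcases step_parity (E := False) ht (fun i => by rw [h0 i]; simpa using i.2) with h | h
    · refine ⟨fun _ => True, ?_, fun i => absurd trivial i.2⟩
      intro i
      exact (none_mem_addO T i.1.1 _).2 ((h i.1).2 id)
    · exact sub_right (fun i : {i // ¬ Even (τ 0 i)} => T i.1) _ _ (fun i => i.2.elim) h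

/-- Embedding of synchronous TeamLTL into ∀TeamCTL(⊆):
T ⊨ₛ φ iff T_o ⊨∀ (φ° ∧ o ∧ (ψ''_synch W_∀ ⊥)), with ⊥ := o ∧ ¬o. -/
theorem embed_sync_into_forallTeamCTL (AP ι : Type) (hne : Nonempty ι)
    (T : ι → Trace AP) (φ : Formula AP) :
    satS T φ ↔
      qsatA (addO T)
        (.and (circ φ)
          (.and (.atom none)
            (.All (.W (psiSynch'' AP) (.and (.atom none) (.natom none)))))) := by
  constructor
  · intro h τ ht h0
    refine ⟨(main_all φ T τ 0 h0).1 h, ?_, ?_⟩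
    · intro i
      rw [h0 i]
      exact (none_mem_addO T i 0).2 (by simp)
    · intro τ' _ _ k
      exact Or.inl (psi_valid T _)
  · intro h
    have := (h (fun m _ => m + 0) (sync_tef hne 0) (fun _ => rfl)).1
    exact (main_all φ T _ 0 (fun _ => rfl)).2 this

end TTS
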